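/- Lipschitz estimate for compositions in Hölder spaces: for l ≥ 1, α ∈ (0,1), there exists C = C(l,α) such that for f₁, f₂ ∈ C^{l+1,α}(𝕋³,ℝ³) and maps g₁, g₂ ∈ C^{l,α}(𝕋³,𝕋³), ‖f₁∘g₁ − f₂∘g₂‖_{l,α} ≤ C(1 + ‖∇g₁‖_{l−1,α} + ‖∇g₂‖_{l−1,α})^{l+1} [‖f₁−f₂‖_{l,α} + (‖∇f₁‖_{l,α} ∧ ‖∇f₂‖_{l,α}) ‖g₁−g₂‖_{l,α}]. -/

import Mathlib

noncomputable section

open MeasureTheory Real Set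

abbrev V3 : Type := Fin 3 → ℝ

def pd (f : V3 → ℝ) (j : Fin 3) (x : V3) : ℝ := fderiv ℝ f x (Pi.single j 1)

def Per {E : Type*} (f : V3 → E) : Prop :=
  ∀ (x : V3) (k : Fin 3 → ℤ), f (x + fun i => (k i : ℝ)) = f x

def TorusMap (g : V3 → V3) : Prop :=
  ∀ (x : V3) (k : Fin 3 → ℤ), g (x + fun i => (k i : ℝ)) = g x + fun i => (k i : ℝ)

def Box : Set V3 := Set.univ.pi fun _ => Set.Ioc (0:ℝ) 1

def l2inner (u v : V3 → V3) : ℝ := ∫ x in Box, ∑ i, u x i * v x i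

def dirD (u v : V3 → V3) : V3 → V3 := fun x i => ∑ j, u x j * pd (fun y => v y i) j x

def lie (u v : V3 → V3) : V3 → V3 := fun x => dirD u v x - dirD v u x

def jmT (σ w : V3 → V3) : V3 → V3 := fun x i => ∑ j, pd (fun y => σ y j) i x * w x j

def gradf (f : V3 → ℝ) : V3 → V3 := fun x i => pd f i x

def divg (u : V3 → V3) (x : V3) : ℝ := ∑ j, pd (fun y => u y j) j x

def curl (u : V3 → V3) : V3 → V3 := fun x =>
  ![pd (fun y => u y 2) 1 x - pd (fun y => u y 1) 2 x,
    pd (fun y => u y 0) 2 x - pd (fun y => u y 2) 0 x,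
    pd (fun y => u y 1) 0 x - pd (fun y => u y 0) 1 x]

def cross (a b : V3) : V3 :=
  ![a 1 * b 2 - a 2 * b 1, a 2 * b 0 - a 0 * b 2, a 0 * b 1 - a 1 * b 0]

def supN {E : Type*} [NormedAddCommGroup E] (f : V3 → E) : ℝ :=
  sSup (Set.range fun x => ‖f x‖)

def hSemi {E : Type*} [NormedAddCommGroup E] (α : ℝ) (f : V3 → E) : ℝ :=
  sSup {r | ∃ x y : V3, x ≠ y ∧ r = ‖f x - f y‖ / ‖x - y‖ ^ α}

def cNorm {E : Type*} [NormedAddCommGroup E] [NormedSpace ℝ E] (l : ℕ) (f : V3 → E) : ℝ :=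
  ∑ m ∈ Finset.range (l + 1), supN (fun x => iteratedFDeriv ℝ m f x)

def holNorm {E : Type*} [NormedAddCommGroup E] [NormedSpace ℝ E] (l : ℕ) (α : ℝ) (f : V3 → E) : ℝ :=
  cNorm l f + hSemi α (fun x => iteratedFDeriv ℝ l f x)

def MemHol {E : Type*} [NormedAddCommGroup E] [NormedSpace ℝ E] (l : ℕ) (α : ℝ) (f : V3 → E) : Prop :=
  ContDiff ℝ l f ∧ ∃ C, ∀ x y, ‖iteratedFDeriv ℝ l f x - iteratedFDeriv ℝ l f y‖ ≤ C * ‖x - y‖ ^ α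

def jac (g : V3 → V3) : V3 → (V3 →L[ℝ] V3) := fun x => fderiv ℝ g x

def c1Norm (f : V3 → V3) : ℝ := supN f + supN (jac f)

def c1αNorm (α : ℝ) (f : V3 → V3) : ℝ := supN f + supN (jac f) + hSemi α (jac f)

def IsFlow (u Y : ℝ → V3 → V3) (T : ℝ) : Prop :=
  (∀ x, Y 0 x = x) ∧ ∀ x, ∀ t ∈ Set.Icc 0 T, HasDerivAt (fun s => Y s x) (u t (Y t x)) t

def weberField (l v : V3 → V3) : V3 → V3 := fun x => v x + jmT l v x

def IsLeray (f w : V3 → V3) : Prop :=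
  Per w ∧ ContDiff ℝ 1 w ∧ (∀ x, divg w x = 0) ∧
  ∃ p : V3 → ℝ, Per p ∧ Differentiable ℝ p ∧ ∀ x, f x = w x + gradf p x

def Inv3 (g h : V3 → V3) : Prop := (∀ x, h (g x) = x) ∧ ∀ x, g (h x) = x

def pullb (g ginv u : V3 → V3) : V3 → V3 := fun x => fderiv ℝ ginv (g x) (u (g x))

def weber (ginv u₀ : V3 → V3) : V3 → V3 := jmT ginv (fun y => u₀ (ginv y))

def InU (l : ℕ) (α τ U : ℝ) (u₀ : V3 → V3) (u : ℝ → V3 → V3) : Prop :=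
  (Continuous fun p : ℝ × V3 => u p.1 p.2) ∧ (∀ x, u 0 x = u₀ x) ∧
  ∀ t ∈ Set.Icc 0 τ, MemHol (l+1) α (u t) ∧ Per (u t) ∧ (∀ x, divg (u t) x = 0) ∧
    holNorm (l+1) α (u t) ≤ U

def PhiRel (φ ψ : ℝ → V3 → V3) (u₀ : V3 → V3) (τ : ℝ) (u uhat : ℝ → V3 → V3) : Prop :=
  ∃ Y Yinv : ℝ → V3 → V3,
    IsFlow (fun t => pullb (φ t) (ψ t) (u t)) Y τ ∧
    (∀ t ∈ Set.Icc 0 τ, Inv3 (Y t) (Yinv t)) ∧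
    ∀ t ∈ Set.Icc 0 τ, IsLeray (weber (fun x => Yinv t (ψ t x)) u₀) (uhat t)

/-!
Write `f₁ ∘ g₁ - f₂ ∘ g₂ = (f₁ - f₂) ∘ g₁ + (f₂ ∘ g₁ - f₂ ∘ g₂)`. Both summands are estimated by
induction on the number of derivatives: the chain rule
`D(f ∘ g₁ - f ∘ g₂) = (Df ∘ g₁ - Df ∘ g₂) Dg₁ + (Df ∘ g₂) D(g₁ - g₂)`
and the algebra property of Hölder spaces pass from `f` to `Df` at the cost of one factor
`1 + ‖∇g‖`. The remaining `C^{0,α}` estimate of `f ∘ g₁ - f ∘ g₂` is a mean value inequality along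
the segments joining `g₂ x` to `g₁ x` and `g₂ y` to `g₁ y`. Exchanging the roles of the two pairs
gives the minimum of the two gradient norms.
-/

universe u

section Rpow

variable {α r G : ℝ}

lemma min_one_le_rpow (hα₀ : 0 ≤ α) (hα₁ : α ≤ 1) (hr : 0 ≤ r) : min 1 r ≤ r ^ α := by
  rcases le_total r 1 with h | h
  · exact (min_le_right _ _).trans (Real.self_le_rpow_of_le_one hr h hα₁)
  · exact (min_le_left _ _).trans (Real.one_le_rpow h hα₀)

lemma mul_rpow_le_mul_rpow (hα₁ : α ≤ 1) (hG : 1 ≤ G) (hr : 0 ≤ r) :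
    (G * r) ^ α ≤ G * r ^ α := by
  rw [Real.mul_rpow (zero_le_one.trans hG) hr]
  gcongr
  exact Real.rpow_le_self_of_one_le hG hα₁

end Rpow

section HolderBound

variable {X Y E F W : Type*} [SeminormedAddCommGroup X] [SeminormedAddCommGroup Y]
  [SeminormedAddCommGroup E] [SeminormedAddCommGroup F] [SeminormedAddCommGroup W]
  {α K L G : ℝ}

/-- `f` lies in the ball of radius `K` of `C^{0,α}`: the number `K` bounds both the supremum and the
`α`-Hölder seminorm of `f`. Carrying a bound rather than the norms `supN` and `hSemi` avoids the
value `0` which these take on unbounded functions. -/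
def HolderBound (α : ℝ) (f : X → E) (K : ℝ) : Prop :=
  (∀ x, ‖f x‖ ≤ K) ∧ ∀ x y, ‖f x - f y‖ ≤ K * ‖x - y‖ ^ α

namespace HolderBound

lemma nonneg {f : X → E} (hf : HolderBound α f K) : 0 ≤ K :=
  (norm_nonneg _).trans (hf.1 0)

lemma mono {f : X → E} (hf : HolderBound α f K) (hKL : K ≤ L) : HolderBound α f L :=
  ⟨fun x => (hf.1 x).trans hKL, fun x y => (hf.2 x y).trans (by gcongr)⟩

lemma add {f g : X → E} (hf : HolderBound α f K) (hg : HolderBound α g L) :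
    HolderBound α (fun x => f x + g x) (K + L) := by
  refine ⟨fun x => norm_add_le_of_le (hf.1 x) (hg.1 x), fun x y => ?_⟩
  rw [add_sub_add_comm, add_mul]
  exact norm_add_le_of_le (hf.2 x y) (hg.2 x y)

lemma neg {f : X → E} (hf : HolderBound α f K) : HolderBound α (fun x => -f x) K := by
  simpa only [HolderBound, norm_neg, neg_sub_neg, norm_sub_rev] using hf

lemma bilinear [NormedSpace ℝ E] [NormedSpace ℝ F] [NormedSpace ℝ W] (B : E →L[ℝ] F →L[ℝ] W)
    {f : X → E} {g : X → F} (hf : HolderBound α f K) (hg : HolderBound α g L) :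
    HolderBound α (fun x => B (f x) (g x)) (2 * (‖B‖ * K * L)) := by
  have hK := hf.nonneg
  have hL := hg.nonneg
  have hB : 0 ≤ ‖B‖ * K * L := by positivity
  refine ⟨fun x => ?_, fun x y => ?_⟩
  · calc ‖B (f x) (g x)‖ ≤ ‖B‖ * K * L := B.le_of_opNorm₂_le_of_le le_rfl (hf.1 x) (hg.1 x)
      _ ≤ 2 * (‖B‖ * K * L) := by linarith
  · have leibniz : B (f x) (g x) - B (f y) (g y) =
        B (f x) (g x - g y) + B (f x - f y) (g y) := by
      simp only [map_sub, sub_apply]; abel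
    calc ‖B (f x) (g x) - B (f y) (g y)‖
        ≤ ‖B‖ * K * (L * ‖x - y‖ ^ α) + ‖B‖ * (K * ‖x - y‖ ^ α) * L := by
          rw [leibniz]
          exact norm_add_le_of_le (B.le_of_opNorm₂_le_of_le le_rfl (hf.1 x) (hg.2 x y))
            (B.le_of_opNorm₂_le_of_le le_rfl (hf.2 x y) (hg.1 y))
      _ = 2 * (‖B‖ * K * L) * ‖x - y‖ ^ α := by ring

lemma of_lipschitz (hα₀ : 0 ≤ α) (hα₁ : α ≤ 1) {f : X → E} (hf : ∀ x, ‖f x‖ ≤ K)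
    (hf' : ∀ x y, ‖f x - f y‖ ≤ K * ‖x - y‖) : HolderBound α f (2 * K) := by
  have hK : 0 ≤ K := (norm_nonneg _).trans (hf 0)
  refine ⟨fun x => (hf x).trans (by linarith), fun x y => ?_⟩
  have hsup : ‖f x - f y‖ ≤ 2 * K * 1 := (norm_sub_le_of_le (hf x) (hf y)).trans (by linarith)
  have hlip : ‖f x - f y‖ ≤ 2 * K * ‖x - y‖ := (hf' x y).trans (by gcongr; linarith)
  calc ‖f x - f y‖ ≤ 2 * K * min 1 ‖x - y‖ := by
        rw [mul_min_of_nonneg _ _ (by positivity)]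
        exact le_min hsup hlip
    _ ≤ 2 * K * ‖x - y‖ ^ α := by
        gcongr
        exact min_one_le_rpow hα₀ hα₁ (norm_nonneg _)

lemma comp (hα₀ : 0 ≤ α) (hα₁ : α ≤ 1) (hG : 1 ≤ G) {f : Y → E} {g : X → Y}
    (hf : HolderBound α f K) (hg : ∀ x y, ‖g x - g y‖ ≤ G * ‖x - y‖) :
    HolderBound α (fun x => f (g x)) (K * G) := by
  have hK := hf.nonneg
  refine ⟨fun x => (hf.1 _).trans (le_mul_of_one_le_right hK hG), fun x y => ?_⟩
  calc ‖f (g x) - f (g y)‖ ≤ K * ‖g x - g y‖ ^ α := hf.2 _ _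
    _ ≤ K * (G * ‖x - y‖) ^ α := by
        gcongr
        exact hg x y
    _ ≤ K * (G * ‖x - y‖ ^ α) := by
        gcongr
        exact mul_rpow_le_mul_rpow hα₁ hG (norm_nonneg _)
    _ = K * G * ‖x - y‖ ^ α := by ring

end HolderBound

end HolderBound

section MeanValue

variable {X Y E : Type*} [SeminormedAddCommGroup X]
  [NormedAddCommGroup Y] [NormedSpace ℝ Y] [NormedAddCommGroup E] [NormedSpace ℝ E]
  {α δ K L G : ℝ}

lemma norm_sub_le_of_norm_fderiv_le {f : Y → E} (hf : Differentiable ℝ f)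
    (hK : ∀ x, ‖fderiv ℝ f x‖ ≤ K) (x y : Y) : ‖f x - f y‖ ≤ K * ‖x - y‖ :=
  convex_univ.norm_image_sub_le_of_norm_fderiv_le (fun z _ => hf z) (fun z _ => hK z)
    (mem_univ y) (mem_univ x)

lemma norm_lineMap_sub_lineMap_le {a b a' b' : Y} (ha : ‖a - a'‖ ≤ δ) (hb : ‖b - b'‖ ≤ δ)
    {t : ℝ} (ht : t ∈ Icc (0 : ℝ) 1) :
    ‖AffineMap.lineMap b a t - AffineMap.lineMap b' a' t‖ ≤ δ := by
  rw [← mem_closedBall_zero_iff, ← vsub_eq_sub, AffineMap.lineMap_vsub_lineMap]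
  exact (convex_closedBall 0 δ).lineMap_mem (by simpa using hb) (by simpa using ha) ht

lemma norm_sub_sub_sub_le_of_holderBound_fderiv (hα₀ : 0 ≤ α) {f : Y → E}
    (hf : Differentiable ℝ f) (hf' : HolderBound α (fderiv ℝ f) K) {a b a' b' : Y}
    (ha : ‖a - a'‖ ≤ δ) (hb : ‖b - b'‖ ≤ δ) :
    ‖(f a - f b) - (f a' - f b')‖ ≤ K * δ ^ α * ‖a - b‖ + K * ‖(a - b) - (a' - b')‖ := by
  have hK := hf'.nonneg
  let p : ℝ → Y := AffineMap.lineMap b a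
  let p' : ℝ → Y := AffineMap.lineMap b' a'
  let φ : ℝ → E := fun t => f (p t) - f (p' t)
  have hφ (t : ℝ) : HasDerivAt φ (fderiv ℝ f (p t) (a - b) - fderiv ℝ f (p' t) (a' - b')) t :=
    ((hf _).hasFDerivAt.comp_hasDerivAt t AffineMap.hasDerivAt_lineMap).sub
      ((hf _).hasFDerivAt.comp_hasDerivAt t AffineMap.hasDerivAt_lineMap)
  have hφ' (t : ℝ) (ht : t ∈ Icc (0 : ℝ) 1) :
      ‖fderiv ℝ f (p t) (a - b) - fderiv ℝ f (p' t) (a' - b')‖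
        ≤ K * δ ^ α * ‖a - b‖ + K * ‖(a - b) - (a' - b')‖ := by
    have split : fderiv ℝ f (p t) (a - b) - fderiv ℝ f (p' t) (a' - b') =
        (fderiv ℝ f (p t) - fderiv ℝ f (p' t)) (a - b)
          + fderiv ℝ f (p' t) ((a - b) - (a' - b')) := by
      simp only [map_sub, sub_apply]; abel
    have hδ : ‖fderiv ℝ f (p t) - fderiv ℝ f (p' t)‖ ≤ K * δ ^ α :=
      (hf'.2 _ _).trans (by gcongr; exact norm_lineMap_sub_lineMap_le ha hb ht)
    rw [split]
    exact norm_add_le_of_le (ContinuousLinearMap.le_of_opNorm_le _ hδ _)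
      (ContinuousLinearMap.le_of_opNorm_le _ (hf'.1 _) _)
  have hφ₁₀ : φ 1 - φ 0 = (f a - f b) - (f a' - f b') := by
    simp only [φ, p, p', AffineMap.lineMap_apply_one, AffineMap.lineMap_apply_zero]; abel
  rw [← hφ₁₀]
  exact norm_image_sub_le_of_norm_deriv_le_segment_01' (fun t _ => (hφ t).hasDerivWithinAt)
    fun t ht => hφ' t (Ico_subset_Icc_self ht)

lemma HolderBound.comp_sub_comp (hα₀ : 0 ≤ α) (hα₁ : α ≤ 1) (hG : 1 ≤ G) {f : Y → E}
    {g₁ g₂ : X → Y} (hf : Differentiable ℝ f) (hf' : HolderBound α (fderiv ℝ f) K)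
    (hg₁ : ∀ x y, ‖g₁ x - g₁ y‖ ≤ G * ‖x - y‖) (hg₂ : ∀ x y, ‖g₂ x - g₂ y‖ ≤ G * ‖x - y‖)
    (hg : HolderBound α (fun x => g₁ x - g₂ x) L) :
    HolderBound α (fun x => f (g₁ x) - f (g₂ x)) (2 * (K * L) * G) := by
  have hK := hf'.nonneg
  have hL := hg.nonneg
  refine ⟨fun x => ?_, fun x y => ?_⟩
  · calc ‖f (g₁ x) - f (g₂ x)‖ ≤ K * ‖g₁ x - g₂ x‖ := norm_sub_le_of_norm_fderiv_le hf hf'.1 _ _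
      _ ≤ K * L := by
          gcongr
          exact hg.1 x
      _ ≤ K * L * (2 * G) := le_mul_of_one_le_right (by positivity) (by linarith)
      _ = 2 * (K * L) * G := by ring
  · calc ‖(f (g₁ x) - f (g₂ x)) - (f (g₁ y) - f (g₂ y))‖
        ≤ K * (G * ‖x - y‖) ^ α * ‖g₁ x - g₂ x‖
            + K * ‖(g₁ x - g₂ x) - (g₁ y - g₂ y)‖ :=
          norm_sub_sub_sub_le_of_holderBound_fderiv hα₀ hf hf' (hg₁ x y) (hg₂ x y)
      _ ≤ K * (G * ‖x - y‖ ^ α) * L + K * (L * ‖x - y‖ ^ α) := by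
          gcongr
          · exact mul_rpow_le_mul_rpow hα₁ hG (norm_nonneg _)
          · exact hg.1 x
          · exact hg.2 x y
      _ ≤ K * (G * ‖x - y‖ ^ α) * L + K * (L * ‖x - y‖ ^ α) * G := by
          refine add_le_add_right ?_ _
          exact le_mul_of_one_le_right (by positivity) hG
      _ = 2 * (K * L) * G * ‖x - y‖ ^ α := by ring

end MeanValue

section CHolderBound

variable {X E : Type*} [NormedAddCommGroup X] [NormedSpace ℝ X] [NormedAddCommGroup E]
  [NormedSpace ℝ E]
  {α K L : ℝ} {m n : ℕ}

lemma norm_iteratedFDeriv_zero_sub (f : X → E) (x y : X) :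
    ‖iteratedFDeriv ℝ 0 f x - iteratedFDeriv ℝ 0 f y‖ = ‖f x - f y‖ := by
  simp only [iteratedFDeriv_zero_eq_comp, Function.comp_apply, ← map_sub,
    LinearIsometryEquiv.norm_map]

lemma norm_iteratedFDeriv_succ_sub (f : X → E) (x y : X) :
    ‖iteratedFDeriv ℝ (m + 1) f x - iteratedFDeriv ℝ (m + 1) f y‖ =
      ‖iteratedFDeriv ℝ m (fderiv ℝ f) x - iteratedFDeriv ℝ m (fderiv ℝ f) y‖ := by
  rw [iteratedFDeriv_succ_eq_comp_right, iteratedFDeriv_succ_eq_comp_right, ← dist_eq_norm,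
    ← dist_eq_norm]
  exact LinearIsometryEquiv.dist_map _ _ _

lemma contDiff_nat_succ_iff_fderiv {f : X → E} :
    ContDiff ℝ (n + 1 : ℕ) f ↔ Differentiable ℝ f ∧ ContDiff ℝ n (fderiv ℝ f) := by
  simp [contDiff_succ_iff_fderiv]

/-- `f` lies in a ball of `C^{n,α}`: every derivative of order at most `n` satisfies `HolderBound`
with the same `K`. Asking for Hölder bounds on the lower derivatives as well makes the notion stable
under lowering `n`. -/
def CHolderBound (n : ℕ) (α : ℝ) (f : X → E) (K : ℝ) : Prop :=
  ContDiff ℝ n f ∧ ∀ m ≤ n, HolderBound α (iteratedFDeriv ℝ m f) K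

lemma holderBound_iteratedFDeriv_zero_iff {f : X → E} :
    HolderBound α (iteratedFDeriv ℝ 0 f) K ↔ HolderBound α f K := by
  simp only [HolderBound, norm_iteratedFDeriv_zero, norm_iteratedFDeriv_zero_sub]

lemma holderBound_iteratedFDeriv_succ_iff {f : X → E} :
    HolderBound α (iteratedFDeriv ℝ (m + 1) f) K ↔
      HolderBound α (iteratedFDeriv ℝ m (fderiv ℝ f)) K := by
  simp only [HolderBound, ← norm_iteratedFDeriv_fderiv, norm_iteratedFDeriv_succ_sub]

lemma cHolderBound_zero_iff {f : X → E} :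
    CHolderBound 0 α f K ↔ Continuous f ∧ HolderBound α f K := by
  simp [CHolderBound, holderBound_iteratedFDeriv_zero_iff]

lemma cHolderBound_succ_iff {f : X → E} :
    CHolderBound (n + 1) α f K ↔
      Differentiable ℝ f ∧ HolderBound α f K ∧ CHolderBound n α (fderiv ℝ f) K := by
  simp only [CHolderBound, contDiff_nat_succ_iff_fderiv, ← Nat.lt_succ_iff,
    Nat.forall_lt_succ_left, holderBound_iteratedFDeriv_zero_iff,
    holderBound_iteratedFDeriv_succ_iff]
  tauto

namespace CHolderBound

lemma holderBound {f : X → E} (hf : CHolderBound n α f K) : HolderBound α f K :=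
  holderBound_iteratedFDeriv_zero_iff.1 (hf.2 0 n.zero_le)

lemma nonneg {f : X → E} (hf : CHolderBound n α f K) : 0 ≤ K :=
  hf.holderBound.nonneg

lemma mono {f : X → E} (hf : CHolderBound n α f K) (hKL : K ≤ L) : CHolderBound n α f L :=
  ⟨hf.1, fun m hm => (hf.2 m hm).mono hKL⟩

lemma of_le {f : X → E} (hf : CHolderBound n α f K) (hmn : m ≤ n) : CHolderBound m α f K :=
  ⟨hf.1.of_le (by exact_mod_cast hmn), fun k hk => hf.2 k (hk.trans hmn)⟩

lemma add {f g : X → E} (hf : CHolderBound n α f K) (hg : CHolderBound n α g L) :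
    CHolderBound n α (fun x => f x + g x) (K + L) := by
  refine ⟨hf.1.add hg.1, fun m hm => ?_⟩
  have hm' : (m : WithTop ℕ∞) ≤ n := by exact_mod_cast hm
  have h : iteratedFDeriv ℝ m (fun x => f x + g x) =
      fun x => iteratedFDeriv ℝ m f x + iteratedFDeriv ℝ m g x := funext fun x =>
    iteratedFDeriv_add_apply (hf.1.of_le hm').contDiffAt (hg.1.of_le hm').contDiffAt
  rw [h]
  exact (hf.2 m hm).add (hg.2 m hm)

lemma sub_comm {f g : X → E} (h : CHolderBound n α (fun x => f x - g x) K) :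
    CHolderBound n α (fun x => g x - f x) K := by
  have hneg : (fun x => g x - f x) = -fun x => f x - g x := funext fun x => (neg_sub _ _).symm
  refine hneg ▸ ⟨h.1.neg, fun m hm => ?_⟩
  have hm : iteratedFDeriv ℝ m (-fun x => f x - g x) =
      fun x => -iteratedFDeriv ℝ m (fun x => f x - g x) x :=
    funext fun x => iteratedFDeriv_neg_apply
  exact hm ▸ (h.2 m ‹_›).neg

end CHolderBound

end CHolderBound

section Composition

variable {X Y E F W : Type u} [NormedAddCommGroup X] [NormedSpace ℝ X]
  [NormedAddCommGroup Y] [NormedSpace ℝ Y] [NormedAddCommGroup E] [NormedSpace ℝ E]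
  [NormedAddCommGroup F] [NormedSpace ℝ F] [NormedAddCommGroup W] [NormedSpace ℝ W]
  {α K K₁ K₂ L M G : ℝ} {n : ℕ}

namespace CHolderBound

set_option maxSynthPendingDepth 3 in
lemma bilinear (B : E →L[ℝ] F →L[ℝ] W) {f : X → E} {g : X → F} (hf : CHolderBound n α f K)
    (hg : CHolderBound n α g L) :
    CHolderBound n α (fun x => B (f x) (g x)) (2 ^ (n + 1) * (‖B‖ * K * L)) := by
  have hK := hf.nonneg
  have hL := hg.nonneg
  induction n generalizing E F W with
  | zero =>
    rw [cHolderBound_zero_iff] at hf hg ⊢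
    exact ⟨B.continuous₂.comp (hf.1.prodMk hg.1), by simpa using hf.2.bilinear B hg.2⟩
  | succ n ih =>
    obtain ⟨df, hf₀, hf'⟩ := cHolderBound_succ_iff.1 hf
    obtain ⟨dg, hg₀, hg'⟩ := cHolderBound_succ_iff.1 hg
    have leibniz : fderiv ℝ (fun x => B (f x) (g x)) = fun x =>
        B.precompR X (f x) (fderiv ℝ g x) + B.precompL X (fderiv ℝ f x) (g x) :=
      funext fun x => B.fderiv_of_bilinear (df x) (dg x)
    refine cHolderBound_succ_iff.2 ⟨fun x => (B.hasFDerivAt_of_bilinear (df x).hasFDerivAt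
      (dg x).hasFDerivAt).differentiableAt, (hf₀.bilinear B hg₀).mono ?_, ?_⟩
    · gcongr
      exact le_self_pow₀ one_le_two (by omega)
    · rw [leibniz]
      refine ((ih (B.precompR X) (hf.of_le n.le_succ) hg').add
        (ih (B.precompL X) hf' (hg.of_le n.le_succ))).mono ?_
      calc 2 ^ (n + 1) * (‖B.precompR X‖ * K * L) + 2 ^ (n + 1) * (‖B.precompL X‖ * K * L)
          ≤ 2 ^ (n + 1) * (‖B‖ * K * L) + 2 ^ (n + 1) * (‖B‖ * K * L) := by
            gcongr
            · exact B.norm_precompR_le X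
            · exact B.norm_precompL_le X
        _ = 2 ^ (n + 1 + 1) * (‖B‖ * K * L) := by ring

lemma clm_comp {f : X → F →L[ℝ] W} {g : X → E →L[ℝ] F} (hf : CHolderBound n α f K)
    (hg : CHolderBound n α g L) :
    CHolderBound n α (fun x => (f x).comp (g x)) (2 ^ (n + 1) * (K * L)) := by
  have hK := hf.nonneg
  have hL := hg.nonneg
  refine (hf.bilinear (ContinuousLinearMap.compL ℝ E F W) hg).mono ?_
  gcongr
  exact mul_le_of_le_one_left hK (ContinuousLinearMap.norm_compL_le ℝ E F W)

end CHolderBound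

/-- `g` is differentiable and its gradient is bounded by `G` in `C^{n-1,α}`, without any bound on
`g` itself: a map of the torus lifts to an unbounded map. For `n = 0` only `‖∇g‖ ≤ G` remains. -/
structure GradHolderBound (n : ℕ) (α : ℝ) (g : X → Y) (G : ℝ) : Prop where
  differentiable : Differentiable ℝ g
  norm_fderiv_le : ∀ x, ‖fderiv ℝ g x‖ ≤ G
  cHolderBound_fderiv : ∀ m < n, CHolderBound m α (fderiv ℝ g) G

namespace GradHolderBound

lemma of_cHolderBound_fderiv {g : X → Y} (hg : Differentiable ℝ g)
    (hg' : CHolderBound n α (fderiv ℝ g) G) : GradHolderBound (n + 1) α g G :=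
  ⟨hg, hg'.holderBound.1, fun _ hm => hg'.of_le (Nat.le_of_lt_succ hm)⟩

lemma of_succ {g : X → Y} (hg : GradHolderBound (n + 1) α g G) : GradHolderBound n α g G :=
  ⟨hg.1, hg.2, fun m hm => hg.3 m (hm.trans n.lt_succ_self)⟩

lemma norm_sub_le {g : X → Y} (hg : GradHolderBound n α g G) (x y : X) :
    ‖g x - g y‖ ≤ G * ‖x - y‖ :=
  norm_sub_le_of_norm_fderiv_le hg.differentiable hg.norm_fderiv_le x y

end GradHolderBound

lemma fderiv_comp_sub_comp {f : Y → E} {g₁ g₂ : X → Y} (hf : Differentiable ℝ f)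
    (hg₁ : Differentiable ℝ g₁) (hg₂ : Differentiable ℝ g₂) :
    fderiv ℝ (fun x => f (g₁ x) - f (g₂ x)) = fun x =>
      (fderiv ℝ f (g₁ x) - fderiv ℝ f (g₂ x)).comp (fderiv ℝ g₁ x)
        + (fderiv ℝ f (g₂ x)).comp (fderiv ℝ (fun z => g₁ z - g₂ z) x) := by
  ext1 x
  rw [fderiv_fun_sub ((hf.fun_comp hg₁) x) ((hf.fun_comp hg₂) x),
    fderiv_fun_sub (hg₁ x) (hg₂ x), fderiv_fun_comp x (hf _) (hg₁ x),
    fderiv_fun_comp x (hf _) (hg₂ x), ContinuousLinearMap.sub_comp, ContinuousLinearMap.comp_sub]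
  abel

namespace CHolderBound

-- Each of the `n` product rules costs at most a factor `2 ^ n`: hence the constant `2 ^ n ^ 2`.
theorem comp (hα₀ : 0 ≤ α) (hα₁ : α ≤ 1) (hG : 1 ≤ G) {f : Y → E} {g : X → Y}
    (hf : CHolderBound n α f K) (hg : GradHolderBound n α g G) :
    CHolderBound n α (fun x => f (g x)) (2 ^ n ^ 2 * K * G ^ (n + 1)) := by
  have hK := hf.nonneg
  induction n generalizing E with
  | zero =>
    rw [cHolderBound_zero_iff] at hf ⊢
    exact ⟨hf.1.comp hg.differentiable.continuous,
      by simpa using hf.2.comp hα₀ hα₁ hG hg.norm_sub_le⟩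
  | succ n ih =>
    obtain ⟨df, hf₀, hf'⟩ := cHolderBound_succ_iff.1 hf
    have chain : fderiv ℝ (fun x => f (g x)) = fun x => (fderiv ℝ f (g x)).comp (fderiv ℝ g x) :=
      funext fun x => fderiv_fun_comp x (df _) (hg.differentiable x)
    refine cHolderBound_succ_iff.2 ⟨df.fun_comp hg.differentiable,
      (hf₀.comp hα₀ hα₁ hG hg.norm_sub_le).mono ?_, ?_⟩
    · gcongr
      · exact le_mul_of_one_le_left hK (one_le_pow₀ one_le_two)
      · exact le_self_pow₀ hG (by omega)
    · rw [chain]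
      refine ((ih hf' hg.of_succ).clm_comp
        (hg.cHolderBound_fderiv n n.lt_succ_self)).mono ?_
      calc 2 ^ (n + 1) * (2 ^ n ^ 2 * K * G ^ (n + 1) * G)
          = 2 ^ (n ^ 2 + (n + 1)) * K * G ^ (n + 1 + 1) := by ring
        _ ≤ 2 ^ (n + 1) ^ 2 * K * G ^ (n + 1 + 1) := by
            gcongr
            · exact one_le_two
            · nlinarith

theorem comp_sub_comp (hα₀ : 0 ≤ α) (hα₁ : α ≤ 1) (hG : 1 ≤ G) {f : Y → E} {g₁ g₂ : X → Y}
    (hf : Differentiable ℝ f) (hf' : CHolderBound n α (fderiv ℝ f) K)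
    (hg₁ : GradHolderBound n α g₁ G) (hg₂ : GradHolderBound n α g₂ G)
    (hg : CHolderBound n α (fun x => g₁ x - g₂ x) L) :
    CHolderBound n α (fun x => f (g₁ x) - f (g₂ x))
      (2 ^ (n + 1) ^ 2 * (K * L) * G ^ (n + 1)) := by
  have hK := hf'.nonneg
  have hL := hg.nonneg
  have dg₁ := hg₁.differentiable
  have dg₂ := hg₂.differentiable
  have base := hf'.holderBound.comp_sub_comp hα₀ hα₁ hG hf hg₁.norm_sub_le hg₂.norm_sub_le
    hg.holderBound
  induction n generalizing E with
  | zero =>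
    exact cHolderBound_zero_iff.2
      ⟨((hf.fun_comp dg₁).fun_sub (hf.fun_comp dg₂)).continuous, by simpa using base⟩
  | succ n ih =>
    obtain ⟨df', -, hf''⟩ := cHolderBound_succ_iff.1 hf'
    obtain ⟨-, -, hg'⟩ := cHolderBound_succ_iff.1 hg
    refine cHolderBound_succ_iff.2
      ⟨(hf.fun_comp dg₁).fun_sub (hf.fun_comp dg₂), base.mono ?_, ?_⟩
    · gcongr
      · exact le_self_pow₀ one_le_two (by positivity)
      · exact le_self_pow₀ hG (by omega)
    · have hdiff := ih df' hf'' hg₁.of_succ hg₂.of_succ (hg.of_le n.le_succ)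
        (hf''.holderBound.comp_sub_comp hα₀ hα₁ hG df' hg₁.norm_sub_le hg₂.norm_sub_le
          hg.holderBound)
      have hcomp := (hf'.of_le n.le_succ).comp hα₀ hα₁ hG hg₂.of_succ
      rw [fderiv_comp_sub_comp hf dg₁ dg₂]
      refine ((hdiff.clm_comp (hg₁.cHolderBound_fderiv n n.lt_succ_self)).add
        (hcomp.clm_comp hg')).mono ?_
      calc 2 ^ (n + 1) * (2 ^ (n + 1) ^ 2 * (K * L) * G ^ (n + 1) * G)
            + 2 ^ (n + 1) * (2 ^ n ^ 2 * K * G ^ (n + 1) * L)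
          ≤ 2 ^ (n + 1) * (2 ^ (n + 1) ^ 2 * (K * L) * G ^ (n + 1) * G)
            + 2 ^ (n + 1) * (2 ^ (n + 1) ^ 2 * K * (G ^ (n + 1) * G) * L) := by
            gcongr
            · exact one_le_two
            · exact n.le_succ
            · exact le_mul_of_one_le_right (by positivity) hG
        _ = 2 ^ ((n + 1) ^ 2 + (n + 2)) * (K * L) * G ^ (n + 1 + 1) := by ring
        _ ≤ 2 ^ (n + 1 + 1) ^ 2 * (K * L) * G ^ (n + 1 + 1) := by
            gcongr
            · exact one_le_two
            · nlinarith

theorem comp_sub_comp_of_fderiv_right (hα₀ : 0 ≤ α) (hα₁ : α ≤ 1) (hG : 1 ≤ G) {f₁ f₂ : Y → E}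
    {g₁ g₂ : X → Y} (hf : CHolderBound n α (fun y => f₁ y - f₂ y) M)
    (df₂ : Differentiable ℝ f₂) (hf₂ : CHolderBound n α (fderiv ℝ f₂) K)
    (hg₁ : GradHolderBound n α g₁ G) (hg₂ : GradHolderBound n α g₂ G)
    (hg : CHolderBound n α (fun x => g₁ x - g₂ x) L) :
    CHolderBound n α (fun x => f₁ (g₁ x) - f₂ (g₂ x))
      (2 ^ (n + 1) ^ 2 * G ^ (n + 1) * (M + K * L)) := by
  have hM := hf.nonneg
  have hsum := (hf.comp hα₀ hα₁ hG hg₁).add (comp_sub_comp hα₀ hα₁ hG df₂ hf₂ hg₁ hg₂ hg)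
  simp only [sub_add_sub_cancel] at hsum
  refine hsum.mono ?_
  calc 2 ^ n ^ 2 * M * G ^ (n + 1) + 2 ^ (n + 1) ^ 2 * (K * L) * G ^ (n + 1)
      ≤ 2 ^ (n + 1) ^ 2 * M * G ^ (n + 1) + 2 ^ (n + 1) ^ 2 * (K * L) * G ^ (n + 1) := by
        gcongr
        · exact one_le_two
        · exact n.le_succ
    _ = 2 ^ (n + 1) ^ 2 * G ^ (n + 1) * (M + K * L) := by ring

theorem comp_sub_comp_min (hα₀ : 0 ≤ α) (hα₁ : α ≤ 1) (hG : 1 ≤ G) {f₁ f₂ : Y → E}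
    {g₁ g₂ : X → Y} (hf : CHolderBound n α (fun y => f₁ y - f₂ y) M)
    (df₁ : Differentiable ℝ f₁) (hf₁ : CHolderBound n α (fderiv ℝ f₁) K₁)
    (df₂ : Differentiable ℝ f₂) (hf₂ : CHolderBound n α (fderiv ℝ f₂) K₂)
    (hg₁ : GradHolderBound n α g₁ G) (hg₂ : GradHolderBound n α g₂ G)
    (hg : CHolderBound n α (fun x => g₁ x - g₂ x) L) :
    CHolderBound n α (fun x => f₁ (g₁ x) - f₂ (g₂ x))
      (2 ^ (n + 1) ^ 2 * G ^ (n + 1) * (M + min K₁ K₂ * L)) := by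
  rcases min_choice K₁ K₂ with h | h <;> rw [h]
  · exact (comp_sub_comp_of_fderiv_right hα₀ hα₁ hG hf.sub_comm df₁ hf₁ hg₂ hg₁
      hg.sub_comm).sub_comm
  · exact comp_sub_comp_of_fderiv_right hα₀ hα₁ hG hf df₂ hf₂ hg₁ hg₂ hg

end CHolderBound

end Composition

section TorusNorms

variable {E : Type*} [NormedAddCommGroup E] {α : ℝ}

lemma supN_nonneg (f : V3 → E) : 0 ≤ supN f :=
  Real.sSup_nonneg (by rintro _ ⟨x, rfl⟩; exact norm_nonneg _)

lemma hSemi_nonneg (α : ℝ) (f : V3 → E) : 0 ≤ hSemi α f :=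
  Real.sSup_nonneg (by rintro _ ⟨x, y, -, rfl⟩; positivity)

lemma HolderBound.supN_le {f : V3 → E} {K : ℝ} (hf : HolderBound α f K) : supN f ≤ K :=
  Real.sSup_le (by rintro _ ⟨x, rfl⟩; exact hf.1 x) hf.nonneg

lemma HolderBound.hSemi_le {f : V3 → E} {K : ℝ} (hf : HolderBound α f K) : hSemi α f ≤ K := by
  refine Real.sSup_le ?_ hf.nonneg
  rintro _ ⟨x, y, hxy, rfl⟩
  have hpos : 0 < ‖x - y‖ := norm_sub_pos_iff.2 hxy
  exact (div_le_iff₀ (by positivity)).2 (hf.2 x y)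

lemma Per.exists_norm_le {f : V3 → E} (hp : Per f) (hf : Continuous f) :
    ∃ C, ∀ x, ‖f x‖ ≤ C := by
  obtain ⟨C, hC⟩ := (isCompact_Icc (a := (0 : V3)) (b := 1)).exists_bound_of_continuousOn
    hf.continuousOn
  refine ⟨C, fun x => ?_⟩
  have hx : ((fun i => Int.fract (x i)) + fun i => (⌊x i⌋ : ℝ)) = x :=
    funext fun i => Int.fract_add_floor (x i)
  rw [← hx, hp]
  exact hC _ ⟨fun i => Int.fract_nonneg _, fun i => (Int.fract_lt_one _).le⟩

lemma Per.norm_le_supN {f : V3 → E} (hp : Per f) (hf : Continuous f) (x : V3) :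
    ‖f x‖ ≤ supN f := by
  obtain ⟨C, hC⟩ := hp.exists_norm_le hf
  exact le_csSup ⟨C, by rintro _ ⟨y, rfl⟩; exact hC y⟩ ⟨x, rfl⟩

lemma norm_sub_le_hSemi_mul_rpow {f : V3 → E} {C : ℝ}
    (hf : ∀ x y, ‖f x - f y‖ ≤ C * ‖x - y‖ ^ α) (x y : V3) :
    ‖f x - f y‖ ≤ hSemi α f * ‖x - y‖ ^ α := by
  rcases eq_or_ne x y with rfl | hxy
  · rw [sub_self, norm_zero]
    exact mul_nonneg (hSemi_nonneg α f) (by positivity)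
  have hpos {x y : V3} (h : x ≠ y) : 0 < ‖x - y‖ ^ α :=
    Real.rpow_pos_of_pos (norm_sub_pos_iff.2 h) α
  refine (div_le_iff₀ (hpos hxy)).1 (le_csSup ⟨C, ?_⟩ ⟨x, y, hxy, rfl⟩)
  rintro _ ⟨x, y, h, rfl⟩
  exact (div_le_iff₀ (hpos h)).2 (hf x y)

variable [NormedSpace ℝ E] {m n : ℕ}

lemma supN_iteratedFDeriv_le_cNorm (f : V3 → E) (hm : m ≤ n) :
    supN (iteratedFDeriv ℝ m f) ≤ cNorm n f :=
  Finset.single_le_sum (f := fun k => supN (iteratedFDeriv ℝ k f)) (fun _ _ => supN_nonneg _)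
    (Finset.mem_range_succ_iff.2 hm)

lemma cNorm_nonneg (n : ℕ) (f : V3 → E) : 0 ≤ cNorm n f :=
  Finset.sum_nonneg fun _ _ => supN_nonneg _

lemma holNorm_nonneg (n : ℕ) (α : ℝ) (f : V3 → E) : 0 ≤ holNorm n α f :=
  add_nonneg (cNorm_nonneg n f) (hSemi_nonneg α _)

lemma CHolderBound.holNorm_le {f : V3 → E} {K : ℝ} (hf : CHolderBound n α f K) :
    holNorm n α f ≤ (n + 2) * K :=
  calc holNorm n α f ≤ ∑ _m ∈ Finset.range (n + 1), K + K :=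
        add_le_add (Finset.sum_le_sum fun m hm => (hf.2 m (Finset.mem_range_succ_iff.1 hm)).supN_le)
          (hf.2 n le_rfl).hSemi_le
    _ = (n + 2) * K := by
        rw [Finset.sum_const, Finset.card_range, nsmul_eq_mul]; push_cast; ring

end TorusNorms

section Periodic

variable {E : Type*} [NormedAddCommGroup E] {α : ℝ} {n : ℕ} {f f₁ f₂ : V3 → E} {g g₁ g₂ : V3 → V3}

protected lemma Per.sub (hf₁ : Per f₁) (hf₂ : Per f₂) : Per fun x => f₁ x - f₂ x := fun x k => by
  simp only [hf₁ x k, hf₂ x k]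

variable [NormedSpace ℝ E]

protected lemma Per.iteratedFDeriv (hf : Per f) (m : ℕ) : Per (iteratedFDeriv ℝ m f) :=
  fun x k => by rw [← iteratedFDeriv_comp_add_right, funext fun z => hf z k]

protected lemma Per.fderiv (hf : Per f) : Per (fderiv ℝ f) := fun x k => by
  rw [← fderiv_comp_add_right, funext fun z => hf z k]

lemma TorusMap.per_jac (hg : TorusMap g) : Per (jac g) := fun x k => by
  unfold jac
  rw [← fderiv_comp_add_right, funext fun z => hg z k, fderiv_add_const]

lemma TorusMap.per_sub (hg₁ : TorusMap g₁) (hg₂ : TorusMap g₂) : Per fun x => g₁ x - g₂ x :=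
  fun x k => by simp only [hg₁ x k, hg₂ x k, add_sub_add_right_eq_sub]

namespace MemHol

lemma succ_iff : MemHol (n + 1) α f ↔ Differentiable ℝ f ∧ MemHol n α (fderiv ℝ f) := by
  simp only [MemHol, contDiff_nat_succ_iff_fderiv, norm_iteratedFDeriv_succ_sub, and_assoc]

protected lemma sub (hf₁ : MemHol n α f₁) (hf₂ : MemHol n α f₂) :
    MemHol n α fun x => f₁ x - f₂ x := by
  obtain ⟨C₁, hC₁⟩ := hf₁.2
  obtain ⟨C₂, hC₂⟩ := hf₂.2
  refine ⟨hf₁.1.sub hf₂.1, C₁ + C₂, fun x y => ?_⟩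
  have hsub (z : V3) : iteratedFDeriv ℝ n (fun x => f₁ x - f₂ x) z =
      iteratedFDeriv ℝ n f₁ z - iteratedFDeriv ℝ n f₂ z :=
    iteratedFDeriv_sub_apply hf₁.1.contDiffAt hf₂.1.contDiffAt
  rw [hsub, hsub, add_mul, sub_sub_sub_comm]
  exact norm_sub_le_of_le (hC₁ x y) (hC₂ x y)

-- Below the top order the Hölder bound comes from the mean value inequality: hence the factor `2`.
theorem cHolderBound (hα₀ : 0 ≤ α) (hα₁ : α ≤ 1) (hf : MemHol n α f) (hp : Per f) :
    CHolderBound n α f (2 * holNorm n α f) := by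
  have hN := holNorm_nonneg n α f
  have hsup {m : ℕ} (hm : m ≤ n) (x : V3) : ‖iteratedFDeriv ℝ m f x‖ ≤ holNorm n α f :=
    calc ‖iteratedFDeriv ℝ m f x‖ ≤ supN (iteratedFDeriv ℝ m f) :=
          (hp.iteratedFDeriv m).norm_le_supN
            (hf.1.continuous_iteratedFDeriv (by exact_mod_cast hm)) x
      _ ≤ cNorm n f := supN_iteratedFDeriv_le_cNorm f hm
      _ ≤ holNorm n α f := le_add_of_nonneg_right (hSemi_nonneg α _)
  refine ⟨hf.1, fun m hm => ?_⟩
  rcases hm.lt_or_eq with hlt | rfl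
  · refine HolderBound.of_lipschitz hα₀ hα₁ (hsup hm) (norm_sub_le_of_norm_fderiv_le
      (hf.1.differentiable_iteratedFDeriv (by exact_mod_cast hlt)) fun x => ?_)
    rw [norm_fderiv_iteratedFDeriv]
    exact hsup hlt x
  · obtain ⟨C, hC⟩ := hf.2
    refine ⟨fun x => (hsup le_rfl x).trans (by linarith), fun x y => ?_⟩
    refine (norm_sub_le_hSemi_mul_rpow hC x y).trans ?_
    gcongr
    calc hSemi α (iteratedFDeriv ℝ m f) ≤ holNorm m α f :=
          le_add_of_nonneg_left (cNorm_nonneg m f)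
      _ ≤ 2 * holNorm m α f := by linarith

lemma of_succ (hα₀ : 0 ≤ α) (hα₁ : α ≤ 1) (hf : MemHol (n + 1) α f) (hp : Per f) :
    MemHol n α f :=
  ⟨hf.1.of_le (by exact_mod_cast n.le_succ), _,
    ((hf.cHolderBound hα₀ hα₁ hp).2 n n.le_succ).2⟩

end MemHol

lemma TorusMap.gradHolderBound (hα₀ : 0 ≤ α) (hα₁ : α ≤ 1) (hg : TorusMap g)
    (dg : Differentiable ℝ g) (hj : MemHol n α (jac g)) {G : ℝ} (hG : 2 * holNorm n α (jac g) ≤ G) :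
    GradHolderBound (n + 1) α g G :=
  .of_cHolderBound_fderiv dg ((hj.cHolderBound hα₀ hα₁ hg.per_jac).mono hG)

end Periodic

theorem holder_composition_lipschitz_general {E : Type} [NormedAddCommGroup E] [NormedSpace ℝ E]
    {l : ℕ} (hl : 1 ≤ l) {α : ℝ} (hα₀ : 0 ≤ α) (hα₁ : α ≤ 1) {f₁ f₂ : V3 → E} {g₁ g₂ : V3 → V3}
    (hf₁ : MemHol (l + 1) α f₁) (pf₁ : Per f₁) (hf₂ : MemHol (l + 1) α f₂) (pf₂ : Per f₂)
    (dg₁ : Differentiable ℝ g₁) (tg₁ : TorusMap g₁) (hg₁ : MemHol (l - 1) α (jac g₁))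
    (dg₂ : Differentiable ℝ g₂) (tg₂ : TorusMap g₂) (hg₂ : MemHol (l - 1) α (jac g₂)) :
    holNorm l α (fun x => f₁ (g₁ x) - f₂ (g₂ x))
      ≤ (l + 2) * 2 ^ ((l + 1) ^ 2 + l + 3)
        * (1 + holNorm (l - 1) α (jac g₁) + holNorm (l - 1) α (jac g₂)) ^ (l + 1)
        * (holNorm l α (fun x => f₁ x - f₂ x)
          + min (holNorm l α (fderiv ℝ f₁)) (holNorm l α (fderiv ℝ f₂))
            * holNorm l α (fun x => g₁ x - g₂ x)) := by
  obtain ⟨n, rfl⟩ := Nat.exists_eq_add_of_le' hl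
  simp only [Nat.add_sub_cancel] at hg₁ hg₂ ⊢
  obtain ⟨df₁, hf₁'⟩ := MemHol.succ_iff.1 hf₁
  obtain ⟨df₂, hf₂'⟩ := MemHol.succ_iff.1 hf₂
  have hf := ((hf₁.sub hf₂).of_succ hα₀ hα₁ (pf₁.sub pf₂)).cHolderBound hα₀ hα₁ (pf₁.sub pf₂)
  have hg := ((MemHol.succ_iff.2 ⟨dg₁, hg₁⟩).sub (MemHol.succ_iff.2 ⟨dg₂, hg₂⟩)).cHolderBound
    hα₀ hα₁ (tg₁.per_sub tg₂)
  have hN₁ := holNorm_nonneg n α (jac g₁)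
  have hN₂ := holNorm_nonneg n α (jac g₂)
  set N := 1 + holNorm n α (jac g₁) + holNorm n α (jac g₂)
  set M := holNorm (n + 1) α fun x => f₁ x - f₂ x
  set L := holNorm (n + 1) α fun x => g₁ x - g₂ x
  have key := CHolderBound.comp_sub_comp_min hα₀ hα₁ (G := 2 * N) (by linarith) hf
    df₁ (hf₁'.cHolderBound hα₀ hα₁ pf₁.fderiv) df₂ (hf₂'.cHolderBound hα₀ hα₁ pf₂.fderiv)
    (tg₁.gradHolderBound hα₀ hα₁ dg₁ hg₁ (by linarith))
    (tg₂.gradHolderBound hα₀ hα₁ dg₂ hg₂ (by linarith)) hg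
  rw [← mul_min_of_nonneg _ _ zero_le_two] at key
  set K := min (holNorm (n + 1) α (fderiv ℝ f₁)) (holNorm (n + 1) α (fderiv ℝ f₂))
  have hM : 0 ≤ M := holNorm_nonneg _ _ _
  calc holNorm (n + 1) α (fun x => f₁ (g₁ x) - f₂ (g₂ x))
      ≤ ((n + 1 : ℕ) + 2) * (2 ^ (n + 1 + 1) ^ 2 * (2 * N) ^ (n + 1 + 1)
          * (2 * M + 2 * K * (2 * L))) := key.holNorm_le
    _ ≤ ((n + 1 : ℕ) + 2) * (2 ^ (n + 1 + 1) ^ 2 * (2 * N) ^ (n + 1 + 1) * (4 * (M + K * L))) := by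
        gcongr
        linarith
    _ = ((n + 1 : ℕ) + 2) * 2 ^ ((n + 1 + 1) ^ 2 + (n + 1) + 3) * N ^ (n + 1 + 1)
          * (M + K * L) := by rw [mul_pow 2 N]; ring

/-- Lipschitz estimate for compositions in Hölder spaces. -/
theorem holder_composition_lipschitz
    (l : ℕ) (hl : 1 ≤ l) (α : ℝ) (hα : α ∈ Set.Ioo (0:ℝ) 1) :
    ∃ C > 0, ∀ f₁ f₂ g₁ g₂ : V3 → V3,
      MemHol (l+1) α f₁ → Per f₁ → MemHol (l+1) α f₂ → Per f₂ →
      ContDiff ℝ l g₁ → TorusMap g₁ → MemHol (l-1) α (jac g₁) →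
      ContDiff ℝ l g₂ → TorusMap g₂ → MemHol (l-1) α (jac g₂) →
      holNorm l α (fun x => f₁ (g₁ x) - f₂ (g₂ x))
        ≤ C * (1 + holNorm (l-1) α (jac g₁) + holNorm (l-1) α (jac g₂)) ^ (l+1)
          * (holNorm l α (fun x => f₁ x - f₂ x)
            + min (holNorm l α (jac f₁)) (holNorm l α (jac f₂))
              * holNorm l α (fun x => g₁ x - g₂ x)) :=
  ⟨_, by positivity, fun _ _ _ _ hf₁ pf₁ hf₂ pf₂ cg₁ tg₁ hg₁ cg₂ tg₂ hg₂ =>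
    holder_composition_lipschitz_general hl hα.1.le hα.2.le hf₁ pf₁ hf₂ pf₂
      (cg₁.differentiable (by positivity)) tg₁ hg₁ (cg₂.differentiable (by positivity)) tg₂ hg₂⟩
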